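/- arXiv:2404.07536 — 3 statements merged into one kernel-verified Lean document; each statement's English description precedes it below -/
import Mathlib

section
/- Let n, o be positive integers, P ∈ ℝ^{n×n} symmetric positive semidefinite, H ∈ ℝ^{o×n}, and R ∈ ℝ^{o×o} symmetric positive definite. Then the matrix H P Hᵀ + R is invertible and the optimal Kalman gain G* = P Hᵀ (H P Hᵀ + R)⁻¹ is the unique minimizer over G ∈ ℝ^{n×o} of the trace of the Joseph-form covariance update, i.e. trace(P⁺(G*)) ≤ trace(P⁺(G)) for all G ∈ ℝ^{n×o}, with equality only if G = G*. -/
open Matrix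

/-- The trace of `D S Dᵀ` is nonnegative for positive definite `S`, and vanishes only at `D = 0`. -/
theorem trace_quad_nonneg {n o : ℕ} {S : Matrix (Fin o) (Fin o) ℝ} (hS : S.PosDef)
    (D : Matrix (Fin n) (Fin o) ℝ) :
    0 ≤ (D * S * Dᵀ).trace ∧ ((D * S * Dᵀ).trace = 0 → D = 0) := by
  have e : (D * S * Dᵀ).trace = ∑ i, star (D i) ⬝ᵥ (S *ᵥ D i) := by
    simp only [trace, diag_apply]
    refine Finset.sum_congr rfl fun i _ => ?_
    rw [star_trivial, dotProduct_mulVec]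
    rfl
  have hn : ∀ i, 0 ≤ star (D i) ⬝ᵥ (S *ᵥ D i) := fun i =>
    hS.posSemidef.dotProduct_mulVec_nonneg (D i)
  rw [e]
  refine ⟨Finset.sum_nonneg fun i _ => hn i, fun h => ?_⟩
  rw [Finset.sum_eq_zero_iff_of_nonneg fun i _ => hn i] at h
  funext i
  by_contra hi
  exact (hS.dotProduct_mulVec_pos hi).ne' (h i (Finset.mem_univ i))

theorem kalman_gain_optimal (n o : ℕ) (hn : 0 < n) (ho : 0 < o)
    (P : Matrix (Fin n) (Fin n) ℝ) (hP : P.PosSemidef)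
    (H : Matrix (Fin o) (Fin n) ℝ)
    (R : Matrix (Fin o) (Fin o) ℝ) (hR : R.PosDef) :
    IsUnit (H * P * Hᵀ + R) ∧
    ∀ G : Matrix (Fin n) (Fin o) ℝ,
      ((1 - (P * Hᵀ * (H * P * Hᵀ + R)⁻¹) * H) * P *
          (1 - (P * Hᵀ * (H * P * Hᵀ + R)⁻¹) * H)ᵀ +
        (P * Hᵀ * (H * P * Hᵀ + R)⁻¹) * R * (P * Hᵀ * (H * P * Hᵀ + R)⁻¹)ᵀ).trace ≤
      ((1 - G * H) * P * (1 - G * H)ᵀ + G * R * Gᵀ).trace ∧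
      (((1 - (P * Hᵀ * (H * P * Hᵀ + R)⁻¹) * H) * P *
          (1 - (P * Hᵀ * (H * P * Hᵀ + R)⁻¹) * H)ᵀ +
        (P * Hᵀ * (H * P * Hᵀ + R)⁻¹) * R * (P * Hᵀ * (H * P * Hᵀ + R)⁻¹)ᵀ).trace =
       ((1 - G * H) * P * (1 - G * H)ᵀ + G * R * Gᵀ).trace →
       G = P * Hᵀ * (H * P * Hᵀ + R)⁻¹) := by
  have hS : (H * P * Hᵀ + R).PosDef := by
    have h1 := hP.mul_mul_conjTranspose_same H
    rw [conjTranspose_eq_transpose_of_trivial] at h1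
    exact PosDef.posSemidef_add h1 hR
  have hU := hS.isUnit
  refine ⟨hU, fun G => ?_⟩
  have hPt : Pᵀ = P := by
    have := hP.isHermitian.eq
    rwa [conjTranspose_eq_transpose_of_trivial] at this
  have hSt : (H * P * Hᵀ + R)ᵀ = H * P * Hᵀ + R := by
    have := hS.isHermitian.eq
    rwa [conjTranspose_eq_transpose_of_trivial] at this
  have hK : (P * Hᵀ * (H * P * Hᵀ + R)⁻¹) * (H * P * Hᵀ + R) = P * Hᵀ := by
    rw [Matrix.mul_assoc, nonsing_inv_mul _ ((isUnit_iff_isUnit_det _).1 hU), Matrix.mul_one]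
  generalize P * Hᵀ * (H * P * Hᵀ + R)⁻¹ = K at *
  have hK2 : (H * P * Hᵀ + R) * Kᵀ = H * P := by
    have := congrArg transpose hK
    rwa [transpose_mul, hSt, transpose_mul, transpose_transpose, hPt] at this
  have key : ∀ G : Matrix (Fin n) (Fin o) ℝ,
      (1 - G * H) * P * (1 - G * H)ᵀ + G * R * Gᵀ =
        P - K * (H * P * Hᵀ + R) * Kᵀ + (G - K) * (H * P * Hᵀ + R) * (G - K)ᵀ := by
    intro G
    have e1 : (1 - G * H) * P * (1 - G * H)ᵀ + G * R * Gᵀ =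
        P - G * (H * P) - (P * Hᵀ) * Gᵀ + G * (H * P * Hᵀ + R) * Gᵀ := by
      simp only [transpose_sub, transpose_one, transpose_mul, Matrix.sub_mul, Matrix.mul_sub,
        Matrix.mul_add, Matrix.add_mul, Matrix.one_mul, Matrix.mul_one, Matrix.mul_assoc]
      abel
    rw [e1]
    clear e1 hS hU hSt
    generalize H * P * Hᵀ + R = S at *
    rw [← hK2, ← hK]
    simp only [transpose_sub, Matrix.sub_mul, Matrix.mul_sub, Matrix.mul_assoc]
    abel
  have t := trace_quad_nonneg hS (G - K)
  rw [key K, key G]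
  simp only [sub_self, Matrix.zero_mul, add_zero, trace_add]
  refine ⟨by linarith [t.1], fun h => sub_eq_zero.1 (t.2 (by linarith))⟩
end

section
/- Let f : ℝⁿ → ℝⁿ be L-Lipschitz with L > 0, let x : [0, T] → ℝⁿ be twice differentiable with x'(t) = f(x(t)) for all t ∈ [0, T] and ‖x''(t)‖ ≤ M on [0, T]. Fix Δt > 0 and define the forward Euler iterates x₀ = x(0) and x_{j+1} = x_j + Δt · f(x_j), with t_j = j Δt. Then for every j with t_j ≤ T, the global error satisfies ‖x(t_j) − x_j‖ ≤ (M Δt / (2L)) · (exp(L t_j) − 1). -/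
theorem euler_global_error
    (n : ℕ) (f : EuclideanSpace ℝ (Fin n) → EuclideanSpace ℝ (Fin n))
    (L : ℝ) (hL : 0 < L)
    (hf : ∀ a b, ‖f a - f b‖ ≤ L * ‖a - b‖)
    (x : ℝ → EuclideanSpace ℝ (Fin n)) (x'' : ℝ → EuclideanSpace ℝ (Fin n))
    (T M Δt : ℝ) (hΔt : 0 < Δt)
    (hx' : ∀ t ∈ Set.Icc (0 : ℝ) T, HasDerivAt x (f (x t)) t)
    (hx'' : ∀ t ∈ Set.Icc (0 : ℝ) T, HasDerivAt (fun s => f (x s)) (x'' t) t)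
    (hM : ∀ t ∈ Set.Icc (0 : ℝ) T, ‖x'' t‖ ≤ M)
    (xe : ℕ → EuclideanSpace ℝ (Fin n))
    (h0 : xe 0 = x 0)
    (hstep : ∀ j : ℕ, xe (j + 1) = xe j + Δt • f (xe j)) :
    ∀ j : ℕ, (j : ℝ) * Δt ≤ T →
      ‖x ((j : ℝ) * Δt) - xe j‖ ≤
        M * Δt / (2 * L) * (Real.exp (L * ((j : ℝ) * Δt)) - 1) := by
  intro j
  induction j with
  | zero => intro _; simp [h0]
  | succ j ih =>
    intro hj
    push_cast at hj ⊢
    have hj0 : (0 : ℝ) ≤ (j : ℝ) * Δt := by positivity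
    have hjT : (j : ℝ) * Δt ≤ T := by linarith
    specialize ih hjT
    have hM0 : 0 ≤ M := (norm_nonneg _).trans (hM _ ⟨hj0, hjT⟩)
    set a : ℝ := (j : ℝ) * Δt with ha
    have hb : ((j : ℝ) + 1) * Δt = a + Δt := by rw [ha]; ring
    rw [hb] at hj ⊢
    have hmem : ∀ s ∈ Set.Icc a (a + Δt), s ∈ Set.Icc (0 : ℝ) T :=
      fun s hs => ⟨hj0.trans hs.1, hs.2.trans hj⟩
    have h1 : ∀ s ∈ Set.Icc a (a + Δt), ‖f (x s) - f (x a)‖ ≤ M * (s - a) :=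
      norm_image_sub_le_of_norm_deriv_le_segment'
        (fun s hs => (hx'' s (hmem s hs)).hasDerivWithinAt)
        (fun s hs => hM s (hmem s ⟨hs.1, hs.2.le⟩))
    have hd : ∀ s ∈ Set.Icc a (a + Δt),
        HasDerivAt (fun s => x s - x a - (s - a) • f (x a)) (f (x s) - f (x a)) s := by
      intro s hs
      have h := ((hx' s (hmem s hs)).sub_const (x a)).sub
        (((hasDerivAt_id s).sub_const a).smul_const (f (x a)))
      rw [one_smul] at h
      exact h
    have h2 : ‖x (a + Δt) - x a - (a + Δt - a) • f (x a)‖ ≤ M / 2 * (a + Δt - a) ^ 2 := by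
      refine image_norm_le_of_norm_deriv_right_le_deriv_boundary
        (f := fun s => x s - x a - (s - a) • f (x a))
        (f' := fun s => f (x s) - f (x a))
        (B := fun s => M / 2 * (s - a) ^ 2) (B' := fun s => M * (s - a))
        (a := a) (b := a + Δt)
        (fun s hs => (hd s hs).continuousAt.continuousWithinAt)
        (fun s hs => (hd s ⟨hs.1, hs.2.le⟩).hasDerivWithinAt) (by simp) ?_
        (fun s hs => h1 s ⟨hs.1, hs.2.le⟩) ⟨by linarith, le_rfl⟩
      intro s
      have h := (((hasDerivAt_id s).sub_const a).pow 2).const_mul (M / 2)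
      refine HasDerivAt.congr_deriv (f := fun s => M / 2 * (s - a) ^ 2) h ?_
      simp only [id]
      norm_num
      ring
    rw [add_sub_cancel_left] at h2
    have key : x (a + Δt) - xe (j + 1) = (x (a + Δt) - x a - Δt • f (x a))
        + (x a - xe j) + Δt • (f (x a) - f (xe j)) := by
      rw [hstep, smul_sub]; abel
    have h3 : ‖Δt • (f (x a) - f (xe j))‖ ≤ Δt * (L * ‖x a - xe j‖) := by
      rw [norm_smul, Real.norm_of_nonneg hΔt.le]
      exact mul_le_mul_of_nonneg_left (hf _ _) hΔt.le
    have h4 : ‖x (a + Δt) - xe (j + 1)‖ ≤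
        M / 2 * Δt ^ 2 + (1 + L * Δt) * ‖x a - xe j‖ := by
      rw [key]
      refine (norm_add₃_le).trans ?_
      linarith
    have hK : 0 ≤ M * Δt / (2 * L) := by positivity
    have hKL : M / 2 * Δt ^ 2 = M * Δt / (2 * L) * (L * Δt) := by field_simp
    have hE : (1 + L * Δt) * Real.exp (L * a) ≤ Real.exp (L * (a + Δt)) := by
      rw [mul_add, Real.exp_add, mul_comm]
      refine mul_le_mul_of_nonneg_left ?_ (Real.exp_pos _).le
      linarith [Real.add_one_le_exp (L * Δt)]
    have h5 := mul_le_mul_of_nonneg_left ih (by positivity : 0 ≤ 1 + L * Δt)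
    have h6 := mul_le_mul_of_nonneg_left hE hK
    rw [hKL] at h4
    linarith
end

section
/- Let f : ℝ → [0, ∞) be a measurable probability density with respect to Lebesgue measure (∫ f = 1) with finite mean μ = ∫ x f(x) dx and variance σ² = ∫ (x − μ)² f(x) dx for some σ > 0, and assume f · log f is integrable. Then the differential entropy satisfies −∫ f(x) log f(x) dx ≤ (1/2) log(2 π e σ²), and equality holds when f is the Gaussian density with mean μ and variance σ². -/
open MeasureTheory Real

theorem gaussian_max_entropy
    (f : ℝ → ℝ) (hf_meas : Measurable f) (hf_nonneg : ∀ x, 0 ≤ f x)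
    (μ σ : ℝ) (hσ : 0 < σ)
    (hf_int : Integrable f)
    (hf_prob : ∫ x, f x = 1)
    (hmean : ∫ x, x * f x = μ)
    (hvar : ∫ x, (x - μ) ^ 2 * f x = σ ^ 2)
    (hent : Integrable (fun x => f x * Real.log (f x))) :
    -∫ x, f x * Real.log (f x) ≤ (1 / 2) * Real.log (2 * π * Real.exp 1 * σ ^ 2) ∧
    ((∀ x, f x = (Real.sqrt (2 * π * σ ^ 2))⁻¹ * Real.exp (-(x - μ) ^ 2 / (2 * σ ^ 2))) →
      -∫ x, f x * Real.log (f x) = (1 / 2) * Real.log (2 * π * Real.exp 1 * σ ^ 2)) := by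
  have hs2 : 0 < σ ^ 2 := by positivity
  have hvint : Integrable (fun x => (x - μ) ^ 2 * f x) := by
    by_contra h
    rw [integral_undef h] at hvar
    linarith
  obtain ⟨g, hg⟩ : ∃ g : ℝ → ℝ, g = fun x =>
    (Real.sqrt (2 * π * σ ^ 2))⁻¹ * Real.exp (-(x - μ) ^ 2 / (2 * σ ^ 2)) := ⟨_, rfl⟩
  have hgG : g = ProbabilityTheory.gaussianPDFReal μ (Real.toNNReal (σ ^ 2)) := by
    rw [hg, ProbabilityTheory.gaussianPDFReal_def, Real.coe_toNNReal _ hs2.le]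
  have hv0 : (Real.toNNReal (σ ^ 2)) ≠ 0 := by
    exact (Real.toNNReal_pos.mpr hs2).ne'
  have hgint : Integrable g := hgG ▸ ProbabilityTheory.integrable_gaussianPDFReal _ _
  have hg1 : ∫ x, g x = 1 := by
    rw [hgG]; exact ProbabilityTheory.integral_gaussianPDFReal_eq_one μ hv0
  have hgpos : ∀ x, 0 < g x := by
    intro x; rw [hg]; positivity
  have hlog : ∀ x, Real.log (g x) =
      -(1 / 2) * Real.log (2 * π * σ ^ 2) - (x - μ) ^ 2 / (2 * σ ^ 2) := by
    intro x
    rw [hg]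
    simp only
    rw [Real.log_mul (by positivity) (Real.exp_pos _).ne', Real.log_exp, Real.log_inv,
      Real.log_sqrt (by positivity)]
    ring
  have hc : Real.log (2 * π * Real.exp 1 * σ ^ 2) = Real.log (2 * π * σ ^ 2) + 1 := by
    rw [show 2 * π * Real.exp 1 * σ ^ 2 = (2 * π * σ ^ 2) * Real.exp 1 by ring,
      Real.log_mul (by positivity) (Real.exp_pos _).ne', Real.log_exp]
  have hfun : (fun x => f x * Real.log (g x)) = fun x =>
      (-(1 / 2) * Real.log (2 * π * σ ^ 2)) * f x - (2 * σ ^ 2)⁻¹ * ((x - μ) ^ 2 * f x) := by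
    funext x; rw [hlog x]; ring
  have hcint : Integrable (fun x => f x * Real.log (g x)) := by
    rw [hfun]; exact (hf_int.const_mul _).sub (hvint.const_mul _)
  have hcross : ∫ x, f x * Real.log (g x) =
      -((1 / 2) * Real.log (2 * π * Real.exp 1 * σ ^ 2)) := by
    rw [hfun, integral_sub (hf_int.const_mul _) (hvint.const_mul _), integral_const_mul,
      integral_const_mul, hf_prob, hvar, hc]
    field_simp
    ring
  constructor
  · have hle : ∫ x, (f x * Real.log (g x) - f x * Real.log (f x)) ≤ ∫ x, (g x - f x) := by
      apply integral_mono (hcint.sub hent) (hgint.sub hf_int)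
      intro x
      change f x * Real.log (g x) - f x * Real.log (f x) ≤ g x - f x
      rcases (hf_nonneg x).eq_or_lt with h | h
      · rw [← h]; simpa using (hgpos x).le
      · have h1 := Real.log_le_sub_one_of_pos (div_pos (hgpos x) h)
        rw [Real.log_div (hgpos x).ne' h.ne'] at h1
        have h2 := mul_le_mul_of_nonneg_left h1 h.le
        have h3 : f x * (g x / f x - 1) = g x - f x := by field_simp
        linarith
    rw [integral_sub hcint hent, integral_sub hgint hf_int, hcross, hg1, hf_prob] at hle
    linarith
  · intro h
    have hfg : g = f := by rw [hg]; funext x; exact (h x).symm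
    rw [hfg] at hcross
    rw [hcross, neg_neg]
end
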